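/- arXiv:2101.05835 — 4 statements merged into one kernel-verified Lean document; each statement's English description precedes it below -/
import Mathlib

section
/- Fix z > 0. There exist a constant C > 0 and an integer N ≥ 2 such that for every integer n ≥ N, setting ν = n − 1/2, the ratio of consecutive half-integer-order Bessel functions of the second kind satisfies z/(2ν) − (1/6)·z/ν² − C/ν³ ≤ Y_{ν−1}(z)/Y_ν(z) ≤ z/(2ν) + (7/6)·z/ν² + C/ν³, where Y_{ν−1}(z)/Y_ν(z) = y_{n−2}(z)/y_{n−1}(z) in terms of spherical Bessel functions of the second kind. -/
/-- Spherical Bessel function of the first kind `j_n`, defined by the standard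
recurrence `j_{n+1}(z) = ((2n+1)/z) j_n(z) - j_{n-1}(z)`. -/
noncomputable def jsph : ℕ → ℝ → ℝ
  | 0, z => Real.sin z / z
  | 1, z => Real.sin z / z ^ 2 - Real.cos z / z
  | (n + 2), z => ((2 * (n : ℝ) + 3) / z) * jsph (n + 1) z - jsph n z

/-- Spherical Bessel function of the second kind `y_n`, defined by the standard
recurrence `y_{n+1}(z) = ((2n+1)/z) y_n(z) - y_{n-1}(z)`. -/
noncomputable def ysph : ℕ → ℝ → ℝ
  | 0, z => -Real.cos z / z
  | 1, z => -Real.cos z / z ^ 2 - Real.sin z / z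
  | (n + 2), z => ((2 * (n : ℝ) + 3) / z) * ysph (n + 1) z - ysph n z

/-- Spherical Hankel function of the first kind `h^{(1)}_n`. -/
noncomputable def h1sph (n : ℕ) (z : ℝ) : ℂ :=
  (jsph n z : ℂ) + Complex.I * (ysph n z : ℂ)

/-- Spherical Hankel function of the second kind `h^{(2)}_n`. -/
noncomputable def h2sph (n : ℕ) (z : ℝ) : ℂ :=
  (jsph n z : ℂ) - Complex.I * (ysph n z : ℂ)

/-!
Both `j_n(z)` and `y_n(z)` solve `x_{n+2} = ((2n+3)/z) x_{n+1} - x_n`, whose Casoratian is a nonzero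
constant. Since `d/dz (z^{n+2} j_{n+1}) = z^{n+2} j_n`, integrating from `0` gives
`|j_n(z)| ≤ z^n / (2n+1)‼`, so `j_n(z) → 0`, and the Casoratian forbids `|y_n(z)|` from being
eventually strictly decreasing. Once the coefficient is at least `2`, a single step with
`|y_n(z)| ≤ |y_{n+1}(z)|` propagates forever; thus `r_n = y_n / y_{n+1}` is eventually bounded by
`1`. Iterating `r_{n+1} = z / (2n+3 - z r_n)` twice gives
`r_{n-2} = z/(2ν) + z/(2ν²) + O(ν⁻³)`, and the coefficient `1/2` of `z/ν²` lies strictly between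
`-1/6` and `7/6`.
-/

open Filter Topology
open scoped Nat

/-- The sequence `u` solves the three-term recurrence `u (n + 2) = a n * u (n + 1) - u n`. -/
def ThreeTermRec {R : Type*} [Ring R] (a u : ℕ → R) : Prop :=
  ∀ n, u (n + 2) = a n * u (n + 1) - u n

namespace ThreeTermRec

theorem casoratian_eq {R : Type*} [CommRing R] {a u v : ℕ → R}
    (hu : ThreeTermRec a u) (hv : ThreeTermRec a v) (n : ℕ) :
    u (n + 1) * v n - u n * v (n + 1) = u 1 * v 0 - u 0 * v 1 := by
  induction n with
  | zero => rfl
  | succ n ih =>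
    rw [hu n, hv n, ← ih]
    ring

variable {𝕜 : Type*} [NormedField 𝕜] {a u v : ℕ → 𝕜}

theorem norm_succ_le_norm_add_two (hv : ThreeTermRec a v) {n : ℕ} (ha : 2 ≤ ‖a n‖)
    (h : ‖v n‖ ≤ ‖v (n + 1)‖) : ‖v (n + 1)‖ ≤ ‖v (n + 2)‖ :=
  calc ‖v (n + 1)‖ = 2 * ‖v (n + 1)‖ - ‖v (n + 1)‖ := by ring
    _ ≤ ‖a n‖ * ‖v (n + 1)‖ - ‖v n‖ := by gcongr
    _ ≤ ‖v (n + 2)‖ := by simpa only [hv n, norm_mul] using norm_sub_norm_le (a n * v (n + 1)) (v n)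

theorem frequently_norm_le_norm_succ (hu : ThreeTermRec a u) (hv : ThreeTermRec a v)
    (hne : u 1 * v 0 - u 0 * v 1 ≠ 0) (hu0 : Tendsto u atTop (𝓝 0)) :
    ∃ᶠ n in atTop, ‖v n‖ ≤ ‖v (n + 1)‖ := by
  refine fun hdecr ↦ hne ?_
  obtain ⟨M, hM⟩ := eventually_atTop.1 hdecr
  have hbound : ∀ n ≥ M, ‖v n‖ ≤ ‖v M‖ := fun n hn ↦ by
    induction n, hn using Nat.le_induction with
    | base => rfl
    | succ n hn ih => exact (not_le.1 (hM n hn)).le.trans ih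
  have hv_bdd : IsBoundedUnder (· ≤ ·) atTop (norm ∘ v) :=
    isBoundedUnder_of_eventually_le (eventually_atTop.2 ⟨M, hbound⟩)
  have hv_succ_bdd : IsBoundedUnder (· ≤ ·) atTop (norm ∘ fun n ↦ v (n + 1)) :=
    isBoundedUnder_of_eventually_le (eventually_atTop.2 ⟨M, fun n hn ↦ hbound _ (by omega)⟩)
  have hlim : Tendsto (fun n ↦ u (n + 1) * v n - u n * v (n + 1)) atTop (𝓝 (0 - 0)) :=
    ((hu0.comp (tendsto_add_atTop_nat 1)).zero_mul_isBoundedUnder_le hv_bdd).sub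
      (hu0.zero_mul_isBoundedUnder_le hv_succ_bdd)
  simp only [casoratian_eq hu hv, sub_zero] at hlim
  exact tendsto_nhds_unique tendsto_const_nhds hlim

theorem eventually_norm_le_norm_succ (hu : ThreeTermRec a u) (hv : ThreeTermRec a v)
    (hne : u 1 * v 0 - u 0 * v 1 ≠ 0) (hu0 : Tendsto u atTop (𝓝 0))
    (ha : ∀ᶠ n in atTop, 2 ≤ ‖a n‖) :
    ∀ᶠ n in atTop, ‖v n‖ ≤ ‖v (n + 1)‖ := by
  obtain ⟨K, hK⟩ := eventually_atTop.1 ha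
  obtain ⟨M, hKM, hM⟩ := frequently_atTop.1 (frequently_norm_le_norm_succ hu hv hne hu0) K
  refine eventually_atTop.2 ⟨M, fun n hn ↦ ?_⟩
  induction n, hn using Nat.le_induction with
  | base => exact hM
  | succ n hn ih => exact hv.norm_succ_le_norm_add_two (hK n (hKM.trans hn)) ih

theorem succ_ne_zero_of_norm_le (hu : ThreeTermRec a u) (hv : ThreeTermRec a v)
    (hne : u 1 * v 0 - u 0 * v 1 ≠ 0) {n : ℕ} (h : ‖v n‖ ≤ ‖v (n + 1)‖) : v (n + 1) ≠ 0 := by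
  intro h1
  have h0 : v n = 0 := by simpa [h1] using h
  exact hne (by rw [← casoratian_eq hu hv n, h0, h1, mul_zero, mul_zero, sub_zero])

theorem div_succ (hv : ThreeTermRec a v) {n : ℕ} (hn : v (n + 1) ≠ 0) :
    v (n + 1) / v (n + 2) = (a n - v n / v (n + 1))⁻¹ := by
  have hfactor : v (n + 2) = (a n - v n / v (n + 1)) * v (n + 1) := by
    rw [hv n, sub_mul, div_mul_cancel₀ _ hn]
  rw [hfactor, div_mul_cancel_right₀ hn]

theorem norm_div_succ_le (hv : ThreeTermRec a v) {n : ℕ} (hn : v (n + 1) ≠ 0)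
    (h : ‖v n‖ ≤ ‖v (n + 1)‖) (ha : 1 < ‖a n‖) :
    ‖v (n + 1) / v (n + 2)‖ ≤ (‖a n‖ - 1)⁻¹ := by
  have hratio : ‖v n / v (n + 1)‖ ≤ 1 := by
    rw [norm_div]
    exact div_le_one_of_le₀ h (norm_nonneg _)
  rw [hv.div_succ hn, norm_inv]
  refine inv_anti₀ (sub_pos.2 ha) ?_
  linarith [norm_sub_norm_le (a n) (v n / v (n + 1))]

end ThreeTermRec

theorem threeTermRec_jsph (z : ℝ) :
    ThreeTermRec (fun n ↦ (2 * (n : ℝ) + 3) / z) (fun n ↦ jsph n z) :=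
  fun _ ↦ rfl

theorem threeTermRec_ysph (z : ℝ) :
    ThreeTermRec (fun n ↦ (2 * (n : ℝ) + 3) / z) (fun n ↦ ysph n z) :=
  fun _ ↦ rfl

theorem casoratian_jsph_ysph {z : ℝ} (hz : z ≠ 0) :
    jsph 1 z * ysph 0 z - jsph 0 z * ysph 1 z = 1 / z ^ 2 := by
  simp only [jsph, ysph]
  field_simp
  linear_combination z * Real.sin_sq_add_cos_sq z

/-- The function `z ^ (n + 1) * j_n(z)`, given by its own recurrence so that it is smooth at `0`,
where the formulas for `jsph` divide by zero. -/
noncomputable def scaledJsph : ℕ → ℝ → ℝ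
  | 0, z => Real.sin z
  | 1, z => Real.sin z - z * Real.cos z
  | n + 2, z => (2 * (n : ℝ) + 3) * scaledJsph (n + 1) z - z ^ 2 * scaledJsph n z

theorem scaledJsph_eq {z : ℝ} (hz : z ≠ 0) : ∀ n, scaledJsph n z = z ^ (n + 1) * jsph n z
  | 0 => by
    rw [scaledJsph, jsph, zero_add, pow_one, mul_div_cancel₀ _ hz]
  | 1 => by
    rw [scaledJsph, jsph]
    field_simp
    ring
  | n + 2 => by
    rw [scaledJsph, jsph, scaledJsph_eq hz n, scaledJsph_eq hz (n + 1)]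
    field_simp
    ring

theorem scaledJsph_zero_right : ∀ n, scaledJsph n 0 = 0
  | 0 => by simp [scaledJsph]
  | 1 => by simp [scaledJsph]
  | n + 2 => by simp [scaledJsph, scaledJsph_zero_right (n + 1)]

theorem hasDerivAt_scaledJsph_succ (z : ℝ) :
    ∀ n, HasDerivAt (scaledJsph (n + 1)) (z * scaledJsph n z) z
  | 0 => by
    refine ((Real.hasDerivAt_sin z).sub
      ((hasDerivAt_id z).mul (Real.hasDerivAt_cos z))).congr_deriv ?_
    simp only [scaledJsph, id_eq]
    ring
  | 1 => by
    refine (((hasDerivAt_scaledJsph_succ z 0).const_mul (2 * ((0 : ℕ) : ℝ) + 3)).sub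
      ((hasDerivAt_pow 2 z).mul (Real.hasDerivAt_sin z))).congr_deriv ?_
    simp only [scaledJsph]
    push_cast
    ring
  | n + 2 => by
    refine (((hasDerivAt_scaledJsph_succ z (n + 1)).const_mul (2 * ((n + 1 : ℕ) : ℝ) + 3)).sub
      ((hasDerivAt_pow 2 z).mul (hasDerivAt_scaledJsph_succ z n))).congr_deriv ?_
    simp only [scaledJsph]
    push_cast
    ring

theorem abs_scaledJsph_le (n : ℕ) {z : ℝ} (hz : 0 ≤ z) :
    |scaledJsph n z| ≤ z ^ (2 * n + 1) / (2 * n + 1)‼ := by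
  induction n generalizing z with
  | zero => simpa [scaledJsph, abs_of_nonneg hz] using Real.abs_sin_le_abs (x := z)
  | succ n ih =>
    have hdf : ((2 * (n + 1) + 1)‼ : ℝ) = (2 * n + 3) * (2 * n + 1)‼ := by
      rw [show 2 * (n + 1) + 1 = 2 * n + 1 + 2 by ring, Nat.doubleFactorial_add_two]
      push_cast
      ring
    have hderiv_bound (x : ℝ) : HasDerivAt
        (fun x : ℝ ↦ x ^ (2 * (n + 1) + 1) / ((2 * (n + 1) + 1)‼ : ℝ))
        (x * (x ^ (2 * n + 1) / (2 * n + 1)‼)) x := by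
      refine ((hasDerivAt_pow (2 * (n + 1) + 1) x).div_const _).congr_deriv ?_
      rw [hdf]
      push_cast
      field_simp
      ring_nf
    refine image_norm_le_of_norm_deriv_right_le_deriv_boundary
      (fun x _ ↦ (hasDerivAt_scaledJsph_succ x n).continuousAt.continuousWithinAt)
      (fun x _ ↦ (hasDerivAt_scaledJsph_succ x n).hasDerivWithinAt)
      (by simp [scaledJsph_zero_right]) hderiv_bound (fun x hx ↦ ?_) (Set.right_mem_Icc.2 hz)
    rw [norm_mul, Real.norm_of_nonneg hx.1]
    exact mul_le_mul_of_nonneg_left (ih hx.1) hx.1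

theorem abs_jsph_le (n : ℕ) {z : ℝ} (hz : 0 < z) : |jsph n z| ≤ z ^ n / (2 * n + 1)‼ := by
  refine le_of_mul_le_mul_left ?_ (pow_pos hz (n + 1))
  calc z ^ (n + 1) * |jsph n z| = |scaledJsph n z| := by
        rw [scaledJsph_eq hz.ne', abs_mul, abs_of_pos (pow_pos hz _)]
    _ ≤ z ^ (2 * n + 1) / (2 * n + 1)‼ := abs_scaledJsph_le n hz.le
    _ = z ^ (n + 1) * (z ^ n / (2 * n + 1)‼) := by ring

theorem factorial_le_doubleFactorial_two_mul_add_one (n : ℕ) : n ! ≤ (2 * n + 1)‼ := by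
  induction n with
  | zero => rfl
  | succ n ih =>
    rw [Nat.factorial_succ, show 2 * (n + 1) + 1 = 2 * n + 1 + 2 by ring,
      Nat.doubleFactorial_add_two]
    exact Nat.mul_le_mul (by omega) ih

theorem tendsto_jsph_atTop_zero {z : ℝ} (hz : 0 < z) : Tendsto (fun n ↦ jsph n z) atTop (𝓝 0) := by
  refine squeeze_zero_norm (fun n ↦ (abs_jsph_le n hz).trans ?_)
    (FloorSemiring.tendsto_pow_div_factorial_atTop z)
  gcongr
  exact factorial_le_doubleFactorial_two_mul_add_one n

theorem eventually_ysph_succ_ne_zero_and_abs_le {z : ℝ} (hz : 0 < z) :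
    ∀ᶠ n in atTop, ysph (n + 1) z ≠ 0 ∧ |ysph n z| ≤ |ysph (n + 1) z| := by
  have hne : jsph 1 z * ysph 0 z - jsph 0 z * ysph 1 z ≠ 0 := by
    rw [casoratian_jsph_ysph hz.ne']
    positivity
  have hcoeff : ∀ᶠ n : ℕ in atTop, 2 ≤ ‖(2 * (n : ℝ) + 3) / z‖ := by
    filter_upwards [eventually_ge_atTop ⌈z⌉₊] with n hn
    rw [Real.norm_of_nonneg (by positivity), le_div_iff₀ hz]
    linarith [Nat.ceil_le.1 hn]
  filter_upwards [ThreeTermRec.eventually_norm_le_norm_succ (threeTermRec_jsph z)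
    (threeTermRec_ysph z) hne (tendsto_jsph_atTop_zero hz) hcoeff] with n hn
  exact ⟨(threeTermRec_jsph z).succ_ne_zero_of_norm_le (threeTermRec_ysph z) hne hn, hn⟩

theorem ysph_div_succ {z : ℝ} (hz : z ≠ 0) {n : ℕ} (hn : ysph (n + 1) z ≠ 0) :
    ysph (n + 1) z / ysph (n + 2) z = z / (2 * n + 3 - z * (ysph n z / ysph (n + 1) z)) := by
  rw [(threeTermRec_ysph z).div_succ hn, ← inv_div]
  field_simp

theorem abs_ysph_div_succ_le {z : ℝ} (hz : 0 < z) {n : ℕ} (hzn : z ≤ n)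
    (hn : ysph (n + 1) z ≠ 0) (hle : |ysph n z| ≤ |ysph (n + 1) z|) :
    |ysph (n + 1) z / ysph (n + 2) z| ≤ z / (n + 3) := by
  have hnorm : ‖(2 * (n : ℝ) + 3) / z‖ = (2 * n + 3) / z := Real.norm_of_nonneg (by positivity)
  have hlower : (n + 3) / z ≤ (2 * n + 3) / z - 1 := by
    rw [div_sub_one hz.ne']
    gcongr
    linarith
  have hpos : 0 < (n + 3) / z := by positivity
  have hbound := (threeTermRec_ysph z).norm_div_succ_le hn hle (by rw [hnorm]; linarith)
  calc |ysph (n + 1) z / ysph (n + 2) z| ≤ ((2 * n + 3) / z - 1)⁻¹ := hnorm ▸ hbound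
    _ ≤ ((n + 3) / z)⁻¹ := inv_anti₀ hpos hlower
    _ = z / (n + 3) := inv_div _ _

theorem abs_div_sub_two_term_le (z : ℝ) {ν δ K : ℝ} (hν : 0 < ν) (hδ : |δ| * ν ≤ K)
    (hK : K + 2 ≤ ν) :
    |z / (2 * ν - 2 - δ) - (z / (2 * ν) + z / (2 * ν ^ 2))| ≤ |z| * (K + 1) / ν ^ 3 := by
  have hK0 : 0 ≤ K := (mul_nonneg (abs_nonneg δ) hν.le).trans hδ
  have hδK : |δ| ≤ K := (le_mul_of_one_le_right (abs_nonneg δ) (by linarith)).trans hδ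
  have hden : ν ≤ 2 * ν - 2 - δ := by linarith [le_abs_self δ]
  have hden_pos : 0 < 2 * ν - 2 - δ := hν.trans_le hden
  have hnum : |δ * ν + δ + 2| ≤ 2 * (K + 1) :=
    calc |δ * ν + δ + 2| ≤ |δ * ν| + |δ| + |2| := abs_add_three _ _ _
      _ = |δ| * ν + |δ| + 2 := by rw [abs_mul, abs_of_pos hν, abs_two]
      _ ≤ 2 * (K + 1) := by linarith
  calc |z / (2 * ν - 2 - δ) - (z / (2 * ν) + z / (2 * ν ^ 2))|
      = |z * (δ * ν + δ + 2) / (2 * ν ^ 2 * (2 * ν - 2 - δ))| := by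
        congr 1
        rw [div_add_div _ _ (by positivity) (by positivity), div_sub_div _ _ hden_pos.ne'
          (by positivity), div_eq_div_iff (by positivity) (by positivity)]
        ring
    _ = |z| * |δ * ν + δ + 2| / (2 * ν ^ 2 * (2 * ν - 2 - δ)) := by
        rw [abs_div, abs_mul, abs_of_pos (by positivity : 0 < 2 * ν ^ 2 * (2 * ν - 2 - δ))]
    _ ≤ |z| * (2 * (K + 1)) / (2 * ν ^ 2 * ν) := by gcongr
    _ = |z| * (K + 1) / ν ^ 3 := by field_simp

theorem eventually_abs_ysph_div_sub_le {z : ℝ} (hz : 0 < z) :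
    ∀ᶠ n : ℕ in atTop, |ysph n z / ysph (n + 1) z
      - (z / (2 * ((n : ℝ) + 3 / 2)) + z / (2 * ((n : ℝ) + 3 / 2) ^ 2))|
        ≤ z * (2 * z ^ 2 + 1) / ((n : ℝ) + 3 / 2) ^ 3 := by
  rw [← map_add_atTop_eq_nat 2, eventually_map]
  filter_upwards [eventually_ysph_succ_ne_zero_and_abs_le hz,
    (tendsto_add_atTop_nat 1).eventually (eventually_ysph_succ_ne_zero_and_abs_le hz),
    eventually_ge_atTop ⌈2 * z ^ 2 + z⌉₊] with n ⟨hne, hle⟩ ⟨hne_succ, _⟩ hn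
  have hn : 2 * z ^ 2 + z ≤ n := Nat.ceil_le.1 hn
  set δ := z * (ysph (n + 1) z / ysph (n + 2) z) with hδ_def
  set ν := ((n + 2 : ℕ) : ℝ) + 3 / 2 with hν_def
  push_cast at hν_def
  have hδ : |δ| * ν ≤ 2 * z ^ 2 :=
    calc |δ| * ν = z * |ysph (n + 1) z / ysph (n + 2) z| * ν := by
          rw [hδ_def, abs_mul, abs_of_pos hz]
      _ ≤ z * (z / (n + 3)) * (2 * (n + 3)) := by
          gcongr
          · exact abs_ysph_div_succ_le hz (by linarith [sq_nonneg z]) hne hle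
          · linarith
      _ = 2 * z ^ 2 := by field_simp
  have hden : 2 * ((n + 1 : ℕ) : ℝ) + 3 - δ = 2 * ν - 2 - δ := by
    push_cast
    linarith
  rw [ysph_div_succ hz.ne' hne_succ, hden]
  simpa only [abs_of_pos hz] using
    abs_div_sub_two_term_le z (by positivity) hδ (by linarith)

/-- For fixed `z > 0`, asymptotic two-sided bound on the ratio
`Y_{ν-1}(z)/Y_ν(z) = y_{n-2}(z)/y_{n-1}(z)` with `ν = n - 1/2`. -/
theorem ratio_bessel_Y_asymptotic (z : ℝ) (hz : 0 < z) :
    ∃ C : ℝ, 0 < C ∧ ∃ N : ℕ, 2 ≤ N ∧ ∀ n : ℕ, N ≤ n →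
      z / (2 * ((n : ℝ) - 1/2)) - (1/6) * z / ((n : ℝ) - 1/2) ^ 2
          - C / ((n : ℝ) - 1/2) ^ 3
        ≤ ysph (n - 2) z / ysph (n - 1) z ∧
      ysph (n - 2) z / ysph (n - 1) z
        ≤ z / (2 * ((n : ℝ) - 1/2)) + (7/6) * z / ((n : ℝ) - 1/2) ^ 2
          + C / ((n : ℝ) - 1/2) ^ 3 := by
  obtain ⟨N, hN⟩ := eventually_atTop.1 (eventually_abs_ysph_div_sub_le hz)
  refine ⟨z * (2 * z ^ 2 + 1), by positivity, N + 2, by omega, fun n hn ↦ ?_⟩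
  obtain ⟨m, rfl⟩ : ∃ m, n = m + 2 := ⟨n - 2, by omega⟩
  have hν : ((m + 2 : ℕ) : ℝ) - 1 / 2 = m + 3 / 2 := by
    push_cast
    ring
  have hratio := abs_le.1 (hN m (by omega))
  have hslack : 0 ≤ z / ((m : ℝ) + 3 / 2) ^ 2 := by positivity
  have hsecond : z / (2 * ((m : ℝ) + 3 / 2) ^ 2) = 1 / 2 * (z / ((m : ℝ) + 3 / 2) ^ 2) := by
    field_simp
  rw [hν, show m + 2 - 2 = m by omega, show m + 2 - 1 = m + 1 by omega,
    mul_div_assoc (1 / 6), mul_div_assoc (7 / 6)]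
  constructor <;> linarith [hratio.1, hratio.2]
end

section
/- Let 0 < R' < R and 0 < κ_p < κ_s. There exists an integer N such that for every integer n ≥ N, with ν = n − 1/2, the Bessel functions of the second kind of half-integer order ν satisfy |Y_ν(κ_p R)/Y_ν(κ_p R') − Y_ν(κ_s R)/Y_ν(κ_s R')| ≤ (7/3)·(κ_s(κ_s − κ_p)/ν)·R·(R − R')·(R'/R)^ν. -/
/-- Bessel function of the second kind of half-integer order `ν = n - 1/2`:
`Y_{n-1/2}(z) = √(2z/π) y_{n-1}(z)`. -/
noncomputable def Yhalf (n : ℕ) (z : ℝ) : ℝ := Real.sqrt (2 * z / Real.pi) * ysph (n - 1) z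

/-! With `f m z = -z ^ (m + 1) * y_m(z) / (2 * m - 1)‼`, the power laws cancel in
`(a / b) ^ ν * (Y_ν(a) / Y_ν(b)) = f m a / f m b`, where `ν = m + 1 / 2`. The recurrence of the
`y_m` yields `f (m + 1)' = z * f m / (2 * m + 1)` and `f m 0 = 1`, so integrating once gives
`f m = O(1)`, integrating again `f m = 1 + O(1 / m)`, and a third time
`f m = 1 + z ^ 2 / (4 * ν) + O(1 / m ^ 2)`. Hence `ν * (f m a / f m b - 1)` tends to
`(a ^ 2 - b ^ 2) / 4`, and the difference for two wavenumbers is asymptotically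
`(κp ^ 2 - κs ^ 2) * (R ^ 2 - R' ^ 2) / (4 * ν) * (R' / R) ^ ν`. -/

open Filter
open scoped Nat Topology

/-- The normalisation `-z ^ (m + 1) * y_m(z) / (2 * m - 1)‼` of the spherical Bessel function of the
second kind. It is defined by the recurrence it inherits from `y_m`, which also gives it its
entire extension to `z = 0`, where it takes the value `1`. For `m = 0` the truncated
subtraction gives `0‼ = 1`, the conventional value of `(-1)‼`. -/
noncomputable def ysphNormalized : ℕ → ℝ → ℝ
  | 0, z => Real.cos z
  | 1, z => Real.cos z + z * Real.sin z
  | (m + 2), z =>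
    ysphNormalized (m + 1) z - z ^ 2 / ((2 * m + 1) * (2 * m + 3)) * ysphNormalized m z

lemma ysphNormalized_zero_right : ∀ m : ℕ, ysphNormalized m 0 = 1
  | 0 => by simp [ysphNormalized]
  | 1 => by simp [ysphNormalized]
  | (m + 2) => by simp [ysphNormalized, ysphNormalized_zero_right (m + 1)]

lemma hasDerivAt_ysphNormalized_succ (m : ℕ) (z : ℝ) :
    HasDerivAt (ysphNormalized (m + 1)) (z * ysphNormalized m z / (2 * m + 1)) z := by
  have deriv_step {k : ℕ} {d d' : ℝ} (hd : HasDerivAt (ysphNormalized k) d z)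
      (hd' : HasDerivAt (ysphNormalized (k + 1)) d' z) :
      HasDerivAt (ysphNormalized (k + 2)) (d' - (2 * z / ((2 * k + 1) * (2 * k + 3)) *
        ysphNormalized k z + z ^ 2 / ((2 * k + 1) * (2 * k + 3)) * d)) z := by
    have hsq : HasDerivAt (fun x : ℝ => x ^ 2) (2 * z) z := by simpa using hasDerivAt_pow 2 z
    exact hd'.sub ((hsq.div_const _).mul hd)
  have deriv_zero : HasDerivAt (ysphNormalized 0) (-Real.sin z) z := Real.hasDerivAt_cos z
  have deriv_one : HasDerivAt (ysphNormalized 1) (z * Real.cos z) z :=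
    ((Real.hasDerivAt_cos z).add ((hasDerivAt_id z).mul (Real.hasDerivAt_sin z))).congr_deriv
      (by simp)
  induction m using Nat.twoStepInduction with
  | zero => simpa [ysphNormalized] using deriv_one
  | one =>
    refine (deriv_step deriv_zero deriv_one).congr_deriv ?_
    simp only [ysphNormalized]
    push_cast
    ring
  | more m ih ih' =>
    refine (deriv_step ih ih').congr_deriv ?_
    simp only [ysphNormalized]
    push_cast
    field_simp
    ring

lemma ysph_eq_ysphNormalized {z : ℝ} (hz : z ≠ 0) (m : ℕ) :
    ysph m z = -((2 * m - 1)‼ * ysphNormalized m z / z ^ (m + 1)) := by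
  induction m using Nat.twoStepInduction with
  | zero => simp [ysph, ysphNormalized, neg_div]
  | one =>
    rw [show (2 * 1 - 1)‼ = 1 from rfl, Nat.cast_one, ysph, ysphNormalized]
    field_simp
    ring
  | more m ih ih' =>
    have h₁ : (2 * (m + 1) - 1)‼ = (2 * m + 1) * (2 * m - 1)‼ := Nat.doubleFactorial_add_one (2 * m)
    have h₂ : (2 * (m + 2) - 1)‼ = (2 * m + 3) * (2 * (m + 1) - 1)‼ :=
      Nat.doubleFactorial_add_one (2 * m + 2)
    rw [ysph, ih, ih', ysphNormalized, h₂, h₁]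
    push_cast
    field_simp
    ring

lemma norm_le_mul_exp_sq_half {E : Type*} [NormedAddCommGroup E] [NormedSpace ℝ E]
    {f f' : ℝ → E} {c : ℝ} (hf : ∀ x, HasDerivAt f (f' x) x) (hf₀ : ‖f 0‖ ≤ c)
    (hf' : ∀ x, ‖f' x‖ ≤ c * (|x| * Real.exp (x ^ 2 / 2))) (z : ℝ) :
    ‖f z‖ ≤ c * Real.exp (z ^ 2 / 2) := by
  have bound_of_nonneg {g g' : ℝ → E} (hg : ∀ x, HasDerivAt g (g' x) x) (hg₀ : ‖g 0‖ ≤ c)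
      (hg' : ∀ x, ‖g' x‖ ≤ c * (|x| * Real.exp (x ^ 2 / 2))) {x : ℝ} (hx : 0 ≤ x) :
      ‖g x‖ ≤ c * Real.exp (x ^ 2 / 2) := by
    have hexp (y : ℝ) :
        HasDerivAt (fun y => c * Real.exp (y ^ 2 / 2)) (c * (y * Real.exp (y ^ 2 / 2))) y := by
      have hsq : HasDerivAt (fun y : ℝ => y ^ 2 / 2) y y := by
        simpa using (hasDerivAt_pow 2 y).div_const 2
      simpa only [mul_comm] using hsq.exp.const_mul c
    refine image_norm_le_of_norm_deriv_right_le_deriv_boundary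
      (fun y _ => (hg y).continuousAt.continuousWithinAt)
      (fun y _ => (hg y).hasDerivWithinAt) (by simpa using hg₀) hexp (fun y hy => ?_)
      (Set.right_mem_Icc.2 hx)
    simpa only [abs_of_nonneg hy.1] using hg' y
  rcases le_total 0 z with hz | hz
  · exact bound_of_nonneg hf hf₀ hf' hz
  · have hneg (x : ℝ) : HasDerivAt (fun x => f (-x)) (-f' (-x)) x := by
      simpa [Function.comp_def] using (hf (-x)).scomp x (hasDerivAt_neg x)
    simpa using bound_of_nonneg hneg (by simpa using hf₀) (fun x => by simpa using hf' (-x))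
      (neg_nonneg.2 hz)

lemma abs_ysphNormalized_le (m : ℕ) (z : ℝ) : |ysphNormalized m z| ≤ Real.exp (z ^ 2 / 2) := by
  induction m generalizing z with
  | zero => exact (Real.abs_cos_le_one z).trans (Real.one_le_exp (by positivity))
  | succ m ih =>
    have hderiv (x : ℝ) :
        |x * ysphNormalized m x / (2 * m + 1)| ≤ 1 * (|x| * Real.exp (x ^ 2 / 2)) := by
      have hpos : (1 : ℝ) ≤ 2 * m + 1 := by linarith [(m.cast_nonneg : (0 : ℝ) ≤ m)]
      rw [abs_div, abs_mul, abs_of_pos (zero_lt_one.trans_le hpos), one_mul]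
      exact (div_le_self (by positivity) hpos).trans (by gcongr; exact ih x)
    simpa only [one_mul, Real.norm_eq_abs] using
      norm_le_mul_exp_sq_half (hasDerivAt_ysphNormalized_succ m)
        (by simp [ysphNormalized_zero_right]) hderiv z

lemma abs_ysphNormalized_succ_sub_one_le (m : ℕ) (z : ℝ) :
    |ysphNormalized (m + 1) z - 1| ≤ 1 / (2 * m + 1) * Real.exp (z ^ 2 / 2) := by
  refine norm_le_mul_exp_sq_half (fun x => (hasDerivAt_ysphNormalized_succ m x).sub_const 1)
    (by simp only [ysphNormalized_zero_right, sub_self, norm_zero]; positivity) (fun x => ?_) z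
  calc |x * ysphNormalized m x / (2 * m + 1)|
      = 1 / (2 * m + 1) * (|x| * |ysphNormalized m x|) := by
        rw [abs_div, abs_mul, abs_of_pos (by positivity : (0 : ℝ) < 2 * m + 1)]; ring
    _ ≤ 1 / (2 * m + 1) * (|x| * Real.exp (x ^ 2 / 2)) := by
        gcongr; exact abs_ysphNormalized_le m x

lemma abs_ysphNormalized_add_two_sub_le (m : ℕ) (z : ℝ) :
    |ysphNormalized (m + 2) z - 1 - z ^ 2 / 2 / (2 * m + 3)|
      ≤ 1 / (2 * m + 1) / (2 * m + 3) * Real.exp (z ^ 2 / 2) := by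
  have hderiv (x : ℝ) : HasDerivAt
      (fun x => ysphNormalized (m + 2) x - 1 - x ^ 2 / 2 / (2 * m + 3))
      (x * (ysphNormalized (m + 1) x - 1) / (2 * m + 3)) x := by
    have hsq := ((hasDerivAt_pow 2 x).div_const 2).div_const (2 * (m : ℝ) + 3)
    refine (((hasDerivAt_ysphNormalized_succ (m + 1) x).sub_const 1).sub hsq).congr_deriv ?_
    push_cast
    ring
  have hzero : ysphNormalized (m + 2) 0 - 1 - (0 : ℝ) ^ 2 / 2 / (2 * m + 3) = 0 := by
    simp [ysphNormalized_zero_right]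
  refine norm_le_mul_exp_sq_half hderiv (by rw [hzero, norm_zero]; positivity) (fun x => ?_) z
  calc |x * (ysphNormalized (m + 1) x - 1) / (2 * m + 3)|
      = |x| * |ysphNormalized (m + 1) x - 1| / (2 * m + 3) := by
        rw [abs_div, abs_mul, abs_of_pos (by positivity : (0 : ℝ) < 2 * m + 3)]
    _ ≤ |x| * (1 / (2 * m + 1) * Real.exp (x ^ 2 / 2)) / (2 * m + 3) := by
        gcongr; exact abs_ysphNormalized_succ_sub_one_le m x
    _ = 1 / (2 * m + 1) / (2 * m + 3) * (|x| * Real.exp (x ^ 2 / 2)) := by ring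

lemma tendsto_one_div_two_mul_add_one :
    Tendsto (fun m : ℕ => 1 / (2 * (m : ℝ) + 1)) atTop (𝓝 0) :=
  (tendsto_atTop_add_const_right _ 1
    (tendsto_natCast_atTop_atTop.const_mul_atTop two_pos)).const_div_atTop 1

lemma tendsto_ysphNormalized (z : ℝ) :
    Tendsto (fun m => ysphNormalized m z) atTop (𝓝 1) := by
  rw [← tendsto_add_atTop_iff_nat 1, tendsto_iff_norm_sub_tendsto_zero]
  refine squeeze_zero (fun _ => norm_nonneg _) (abs_ysphNormalized_succ_sub_one_le · z) ?_
  simpa using tendsto_one_div_two_mul_add_one.mul_const (Real.exp (z ^ 2 / 2))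

lemma tendsto_mul_ysphNormalized_sub_one (z : ℝ) :
    Tendsto (fun m : ℕ => ((m : ℝ) + 1 / 2) * (ysphNormalized m z - 1)) atTop
      (𝓝 (z ^ 2 / 4)) := by
  have hlim : Tendsto (fun m : ℕ => (2 * (m : ℝ) + 3) * (ysphNormalized (m + 2) z - 1)) atTop
      (𝓝 (z ^ 2 / 2)) := by
    rw [tendsto_iff_norm_sub_tendsto_zero]
    refine squeeze_zero (fun _ => norm_nonneg _) (fun m => ?_)
      (by simpa only [zero_mul] using
        tendsto_one_div_two_mul_add_one.mul_const (Real.exp (z ^ 2 / 2)))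
    have hpos : (0 : ℝ) < 2 * m + 3 := by positivity
    calc ‖(2 * (m : ℝ) + 3) * (ysphNormalized (m + 2) z - 1) - z ^ 2 / 2‖
        = (2 * m + 3) * |ysphNormalized (m + 2) z - 1 - z ^ 2 / 2 / (2 * m + 3)| := by
          rw [Real.norm_eq_abs, ← abs_of_pos hpos, ← abs_mul, abs_of_pos hpos]
          field_simp
      _ ≤ (2 * m + 3) * (1 / (2 * m + 1) / (2 * m + 3) * Real.exp (z ^ 2 / 2)) := by
          gcongr; exact abs_ysphNormalized_add_two_sub_le m z
      _ = 1 / (2 * m + 1) * Real.exp (z ^ 2 / 2) := by field_simp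
  have hone := (tendsto_add_atTop_iff_nat 2).2 (tendsto_ysphNormalized z)
  rw [← tendsto_add_atTop_iff_nat 2]
  convert (hlim.div_const 2).add (hone.sub_const 1) using 2 <;> push_cast <;> ring

lemma tendsto_mul_ysphNormalized_div_sub_one (a b : ℝ) :
    Tendsto (fun m : ℕ => ((m : ℝ) + 1 / 2) * (ysphNormalized m a / ysphNormalized m b - 1)) atTop
      (𝓝 ((a ^ 2 - b ^ 2) / 4)) := by
  have hb := tendsto_ysphNormalized b
  have h := ((tendsto_mul_ysphNormalized_sub_one a).sub
    (tendsto_mul_ysphNormalized_sub_one b)).div hb one_ne_zero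
  rw [div_one, ← sub_div] at h
  refine h.congr' ?_
  filter_upwards [hb.eventually_ne one_ne_zero] with m hm
  simp only [Pi.div_apply]
  field_simp
  ring

lemma Yhalf_succ_eq_ysphNormalized {z : ℝ} (hz : 0 < z) (m : ℕ) :
    Yhalf (m + 1) z = -(√(2 / Real.pi) * (2 * m - 1)‼) *
      (ysphNormalized m z / z ^ ((m : ℝ) + 1 / 2)) := by
  have hsqrt : √(2 * z / Real.pi) = √(2 / Real.pi) * √z := by
    rw [← Real.sqrt_mul (by positivity), div_mul_eq_mul_div]
  have hpow : z ^ (m + 1) = z ^ ((m : ℝ) + 1 / 2) * √z := by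
    rw [Real.sqrt_eq_rpow, ← Real.rpow_add hz, ← Real.rpow_natCast]
    push_cast
    ring_nf
  rw [Yhalf, Nat.add_sub_cancel, ysph_eq_ysphNormalized hz.ne', hsqrt, hpow]
  field_simp

lemma rpow_mul_Yhalf_succ_div {a b : ℝ} (ha : 0 < a) (hb : 0 < b) (m : ℕ) :
    (a / b) ^ ((m : ℝ) + 1 / 2) * (Yhalf (m + 1) a / Yhalf (m + 1) b) =
      ysphNormalized m a / ysphNormalized m b := by
  have hconst : -(√(2 / Real.pi) * ((2 * m - 1)‼ : ℝ)) ≠ 0 := by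
    have := Nat.doubleFactorial_pos (2 * m - 1)
    exact neg_ne_zero.2 (by positivity)
  rw [Yhalf_succ_eq_ysphNormalized ha, Yhalf_succ_eq_ysphNormalized hb,
    mul_div_mul_left _ _ hconst, Real.div_rpow ha.le hb.le]
  field_simp

lemma tendsto_mul_rpow_mul_Yhalf_div_sub_one {a b : ℝ} (ha : 0 < a) (hb : 0 < b) :
    Tendsto (fun n : ℕ => ((n : ℝ) - 1 / 2) *
        ((a / b) ^ ((n : ℝ) - 1 / 2) * (Yhalf n a / Yhalf n b) - 1)) atTop
      (𝓝 ((a ^ 2 - b ^ 2) / 4)) := by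
  rw [← tendsto_add_atTop_iff_nat 1]
  refine (tendsto_mul_ysphNormalized_div_sub_one a b).congr fun m => ?_
  rw [show ((m + 1 : ℕ) : ℝ) - 1 / 2 = m + 1 / 2 by push_cast; ring, rpow_mul_Yhalf_succ_div ha hb]

lemma tendsto_mul_rpow_mul_Yhalf_div_sub_Yhalf_div {R R' κ₁ κ₂ : ℝ} (hR : 0 < R) (hR' : 0 < R')
    (hκ₁ : 0 < κ₁) (hκ₂ : 0 < κ₂) :
    Tendsto (fun n : ℕ => ((n : ℝ) - 1 / 2) * ((R / R') ^ ((n : ℝ) - 1 / 2) *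
        (Yhalf n (κ₁ * R) / Yhalf n (κ₁ * R') - Yhalf n (κ₂ * R) / Yhalf n (κ₂ * R')))) atTop
      (𝓝 ((κ₁ ^ 2 - κ₂ ^ 2) * (R ^ 2 - R' ^ 2) / 4)) := by
  have h₁ := tendsto_mul_rpow_mul_Yhalf_div_sub_one (mul_pos hκ₁ hR) (mul_pos hκ₁ hR')
  have h₂ := tendsto_mul_rpow_mul_Yhalf_div_sub_one (mul_pos hκ₂ hR) (mul_pos hκ₂ hR')
  rw [mul_div_mul_left _ _ hκ₁.ne'] at h₁
  rw [mul_div_mul_left _ _ hκ₂.ne'] at h₂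
  convert h₁.sub h₂ using 2 <;> ring

lemma abs_sq_sub_sq_mul_sq_sub_sq_div_four_lt {R R' κp κs : ℝ}
    (hR' : 0 < R') (hRR : R' < R) (hκp : 0 < κp) (hκ : κp < κs) :
    |(κp ^ 2 - κs ^ 2) * (R ^ 2 - R' ^ 2) / 4| < κs * (κs - κp) * R * (R - R') := by
  have hdiff : 0 < (κs - κp) * (R - R') := mul_pos (sub_pos.2 hκ) (sub_pos.2 hRR)
  have hsum : (κs + κp) * (R + R') < 2 * κs * (2 * R) :=
    mul_lt_mul'' (by linarith) (by linarith) (by linarith) (by linarith)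
  calc |(κp ^ 2 - κs ^ 2) * (R ^ 2 - R' ^ 2) / 4|
      = |-((κs - κp) * (R - R') * ((κs + κp) * (R + R')) / 4)| := by ring_nf
    _ = (κs - κp) * (R - R') * ((κs + κp) * (R + R')) / 4 := by
        have : 0 < (κs + κp) * (R + R') := mul_pos (by linarith) (by linarith)
        rw [abs_neg, abs_of_pos (by positivity)]
    _ < (κs - κp) * (R - R') * (2 * κs * (2 * R)) / 4 := by
        linarith [mul_lt_mul_of_pos_left hsum hdiff]
    _ = κs * (κs - κp) * R * (R - R') := by ring

theorem bessel_Y_ratio_difference_bound_general {R R' κp κs C : ℝ} (hR : 0 < R) (hR' : 0 < R')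
    (hκp : 0 < κp) (hκs : 0 < κs) (hC : |(κp ^ 2 - κs ^ 2) * (R ^ 2 - R' ^ 2) / 4| < C) :
    ∃ N : ℕ, 1 ≤ N ∧ ∀ n : ℕ, N ≤ n →
      |Yhalf n (κp * R) / Yhalf n (κp * R') - Yhalf n (κs * R) / Yhalf n (κs * R')|
        ≤ C / ((n : ℝ) - 1/2) * (R' / R) ^ ((n : ℝ) - 1/2) := by
  have hlim := (tendsto_mul_rpow_mul_Yhalf_div_sub_Yhalf_div hR hR' hκp hκs).abs
  obtain ⟨N, hN⟩ :=
    eventually_atTop.1 ((hlim.eventually_lt_const hC).and (eventually_ge_atTop 1))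
  refine ⟨N, (hN N le_rfl).2, fun n hn => ?_⟩
  obtain ⟨hbound, hn₁⟩ := hN n hn
  have hν : (0 : ℝ) < n - 1 / 2 := by
    linarith [(Nat.one_le_cast.2 hn₁ : (1 : ℝ) ≤ n)]
  have hpow : 0 < (R / R') ^ ((n : ℝ) - 1 / 2) := by positivity
  rw [abs_mul, abs_mul, abs_of_pos hν, abs_of_pos hpow] at hbound
  rw [← inv_div R R', Real.inv_rpow (by positivity), ← div_eq_mul_inv, le_div_iff₀ hpow,
    le_div_iff₀ hν]
  linarith

/-- Difference of ratios of half-integer Bessel functions of the second kind at two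
wavenumbers decays like `(R'/R)^ν`. -/
theorem bessel_Y_ratio_difference_bound (R R' κp κs : ℝ)
    (hR' : 0 < R') (hRR : R' < R) (hκp : 0 < κp) (hκ : κp < κs) :
    ∃ N : ℕ, 1 ≤ N ∧ ∀ n : ℕ, N ≤ n →
      |Yhalf n (κp * R) / Yhalf n (κp * R') - Yhalf n (κs * R) / Yhalf n (κs * R')|
        ≤ (7/3) * (κs * (κs - κp) / ((n : ℝ) - 1/2)) * R * (R - R')
            * (R' / R) ^ ((n : ℝ) - 1/2) := by
  have hlt : |(κp ^ 2 - κs ^ 2) * (R ^ 2 - R' ^ 2) / 4| <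
      7 / 3 * (κs * (κs - κp) * R * (R - R')) := by
    linarith [abs_sq_sub_sq_mul_sq_sub_sq_div_four_lt hR' hRR hκp hκ,
      abs_nonneg ((κp ^ 2 - κs ^ 2) * (R ^ 2 - R' ^ 2) / 4)]
  obtain ⟨N, hN₁, hN⟩ :=
    bessel_Y_ratio_difference_bound_general (hR'.trans hRR) hR' hκp (hκp.trans hκ) hlt
  exact ⟨N, hN₁, fun n hn => (hN n hn).trans_eq (by ring)⟩
end

section
/- Let 0 < κ_p < κ_s and 0 < R' < R. There exists an integer N such that for every integer n ≥ N and for j = 1, 2, the spherical Hankel functions of the first and second kind satisfy |h^{(j)}_n(κ_p R)/h^{(j)}_n(κ_p R') − h^{(j)}_n(κ_s R)/h^{(j)}_n(κ_s R')| ≤ (14/3)·(κ_s(κ_s − κ_p)/n)·R·(R − R')·(R'/R)^{n+1}. -/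
/-!
Write `h⁽¹⁾ₙ(z) = -i (2n-1)‼ z⁻⁽ⁿ⁺¹⁾ wₙ(z)`. Then `wₙ(0) = 1` and `w'ₙ₊₁(z) = z wₙ(z) / (2n+1)`, so
integrating from `0` gives successively `wₙ = O(1)`, `wₙ = 1 + O(1/n)` and
`wₙ(z) = 1 + z² / (4n) + O(1/n²)`. The ratio at wavenumber `κ` is `(R'/R)ⁿ⁺¹ wₙ(κR) / wₙ(κR')`, and
the leading terms `1` cancel in the difference of two ratios: that difference is asymptotic to
`(κp² - κs²)(R² - R'²) / (4n) · (R'/R)ⁿ⁺¹`, whose modulus is at most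
`κs(κs - κp) R(R - R') / n · (R'/R)ⁿ⁺¹`. Since `1 < 14/3`, this leaves room for the error terms. For
real arguments `h⁽²⁾ₙ` is the complex conjugate of `h⁽¹⁾ₙ`.
-/

open Filter Topology
open scoped Nat

lemma h1sph_add_two (n : ℕ) (z : ℝ) :
    h1sph (n + 2) z = (2 * n + 3) / z * h1sph (n + 1) z - h1sph n z := by
  simp only [h1sph, jsph, ysph]
  push_cast
  ring

lemma h2sph_eq_conj_h1sph (n : ℕ) (z : ℝ) : h2sph n z = starRingEnd ℂ (h1sph n z) := by
  simp [h2sph, h1sph, sub_eq_add_neg]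

/-- The spherical Hankel function of the first kind with its leading behaviour
`-i (2n-1)‼ z⁻⁽ⁿ⁺¹⁾` at `z = 0` divided out. It is defined by the recurrence inherited from
`h1sph`, rather than as a quotient, so that it is smooth at `z = 0`. -/
noncomputable def scaledHankel : ℕ → ℝ → ℂ
  | 0, z => Complex.exp (Complex.I * z)
  | 1, z => Complex.exp (Complex.I * z) * (1 - Complex.I * z)
  | n + 2, z => scaledHankel (n + 1) z - z ^ 2 * scaledHankel n z / ((2 * n + 1) * (2 * n + 3))

lemma two_mul_natCast_add_one_ne_zero (n : ℕ) : (2 * n + 1 : ℂ) ≠ 0 :=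
  mod_cast (2 * n).succ_ne_zero

lemma norm_two_mul_natCast_add_one (n : ℕ) : ‖(2 * n + 1 : ℂ)‖ = 2 * n + 1 :=
  mod_cast Complex.norm_natCast (2 * n + 1)

/-- At `n = 0` the truncated subtraction gives `0‼ = 1`, the conventional value of `(-1)‼`. -/
lemma h1sph_eq_scaledHankel {z : ℝ} (hz : z ≠ 0) (n : ℕ) :
    h1sph n z = -Complex.I * (2 * n - 1)‼ * scaledHankel n z / z ^ (n + 1) := by
  have hz' : (z : ℂ) ≠ 0 := mod_cast hz
  have hexp : Complex.exp (Complex.I * z) = Complex.cos z + Complex.sin z * Complex.I := by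
    rw [mul_comm, Complex.exp_mul_I]
  induction n using Nat.twoStepInduction with
  | zero =>
    simp only [h1sph, jsph, ysph, scaledHankel, hexp]
    push_cast
    field_simp
    simp only [Nat.doubleFactorial, Nat.cast_one, mul_one]
    linear_combination Complex.sin z * Complex.I_sq
  | one =>
    simp only [h1sph, jsph, ysph, scaledHankel, hexp]
    push_cast
    field_simp
    simp only [Nat.doubleFactorial, Nat.cast_one, mul_one]
    linear_combination (Complex.sin z - z * Complex.cos z - z * Complex.sin z * Complex.I) *
      Complex.I_sq
  | more n ih₀ ih₁ =>
    have h₁ : (2 * (n + 1) - 1)‼ = (2 * n + 1) * (2 * n - 1)‼ :=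
      Nat.doubleFactorial_add_one (2 * n)
    have h₂ : (2 * (n + 2) - 1)‼ = (2 * n + 3) * (2 * (n + 1) - 1)‼ :=
      Nat.doubleFactorial_add_one (2 * n + 2)
    have hn₁ := two_mul_natCast_add_one_ne_zero n
    have hn₃ : (2 * n + 3 : ℂ) ≠ 0 := mod_cast (2 * n + 2).succ_ne_zero
    rw [h1sph_add_two, ih₀, ih₁, h₂, h₁, scaledHankel]
    push_cast
    field_simp
    ring

lemma h1sph_div_h1sph {x y : ℝ} (hx : x ≠ 0) (hy : y ≠ 0) (n : ℕ) :
    h1sph n x / h1sph n y = (y / x) ^ (n + 1) * (scaledHankel n x / scaledHankel n y) := by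
  have hfact : ((2 * n - 1)‼ : ℂ) ≠ 0 := mod_cast (Nat.doubleFactorial_pos _).ne'
  have hcoeff : -Complex.I * (2 * n - 1)‼ ≠ 0 := mul_ne_zero (by simp) hfact
  rw [h1sph_eq_scaledHankel hx, h1sph_eq_scaledHankel hy, div_div_div_comm,
    mul_div_mul_left _ _ hcoeff, div_pow, div_eq_mul_inv, inv_div, mul_comm]

lemma scaledHankel_zero_right (n : ℕ) : scaledHankel n 0 = 1 := by
  induction n using Nat.twoStepInduction with
  | zero => simp [scaledHankel]
  | one => simp [scaledHankel]
  | more n _ ih => simp [scaledHankel, ih]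

lemma hasDerivAt_ofReal_sq (z : ℝ) : HasDerivAt (fun t : ℝ ↦ (t : ℂ) ^ 2) (2 * z) z := by
  simpa using (hasDerivAt_pow 2 z).ofReal_comp

lemma hasDerivAt_scaledHankel_zero (z : ℝ) :
    HasDerivAt (scaledHankel 0) (scaledHankel 0 z * Complex.I) z := by
  have hlin : HasDerivAt (fun t : ℝ ↦ Complex.I * t) Complex.I z := by
    simpa using (hasDerivAt_id z).ofReal_comp.const_mul Complex.I
  exact hlin.cexp

lemma hasDerivAt_scaledHankel_one (z : ℝ) :
    HasDerivAt (scaledHankel 1) (z * scaledHankel 0 z) z := by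
  have hlin : HasDerivAt (fun t : ℝ ↦ 1 - Complex.I * t) (-Complex.I) z := by
    simpa using ((hasDerivAt_id z).ofReal_comp.const_mul Complex.I).const_sub 1
  refine ((hasDerivAt_scaledHankel_zero z).mul hlin).congr_deriv ?_
  linear_combination -scaledHankel 0 z * z * Complex.I_sq

lemma hasDerivAt_scaledHankel_add_two {n : ℕ} {z : ℝ} {v w : ℂ}
    (hv : HasDerivAt (scaledHankel n) v z) (hw : HasDerivAt (scaledHankel (n + 1)) w z) :
    HasDerivAt (scaledHankel (n + 2))
      (w - (2 * z * scaledHankel n z + z ^ 2 * v) / ((2 * n + 1) * (2 * n + 3))) z :=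
  hw.sub (((hasDerivAt_ofReal_sq z).mul hv).div_const _)

lemma hasDerivAt_scaledHankel_add_one (n : ℕ) (z : ℝ) :
    HasDerivAt (scaledHankel (n + 1)) (z • (scaledHankel n z / (2 * n + 1))) z := by
  rw [Complex.real_smul]
  induction n using Nat.twoStepInduction with
  | zero => simpa using hasDerivAt_scaledHankel_one z
  | one =>
    refine (hasDerivAt_scaledHankel_add_two (hasDerivAt_scaledHankel_zero z)
      (hasDerivAt_scaledHankel_one z)).congr_deriv ?_
    simp only [scaledHankel]
    push_cast
    ring
  | more n ih₀ ih₁ =>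
    have hn₁ := two_mul_natCast_add_one_ne_zero n
    have hn₃ : (2 * n + 3 : ℂ) ≠ 0 := mod_cast (2 * n + 2).succ_ne_zero
    have hn₅ : (2 * n + 5 : ℂ) ≠ 0 := mod_cast (2 * n + 4).succ_ne_zero
    refine (hasDerivAt_scaledHankel_add_two ih₀ ih₁).congr_deriv ?_
    simp only [scaledHankel]
    push_cast
    rw [show (2 * (n + 1) + 1 : ℂ) = 2 * n + 3 by ring,
      show (2 * (n + 1) + 3 : ℂ) = 2 * n + 5 by ring,
      show (2 * (n + 2) + 1 : ℂ) = 2 * n + 5 by ring]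
    field_simp
    ring

/-- Since `∫₀ˣ t exp (t² / 2) dt = exp (x² / 2) - 1`, a bound by this weight survives iterated
integration against `t dt` with the same constant. -/
lemma norm_sub_le_of_hasDerivAt_smul {E : Type*} [NormedAddCommGroup E] [NormedSpace ℝ E]
    {f g : ℝ → E} {C x : ℝ} (hx : 0 ≤ x)
    (hf : ∀ t ∈ Set.Icc 0 x, HasDerivAt f (t • g t) t)
    (hg : ∀ t ∈ Set.Ico 0 x, ‖g t‖ ≤ C * Real.exp (t ^ 2 / 2)) :
    ‖f x - f 0‖ ≤ C * (Real.exp (x ^ 2 / 2) - 1) := by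
  have hsq (t : ℝ) : HasDerivAt (fun t : ℝ ↦ t ^ 2 / 2) t t := by
    simpa using (hasDerivAt_pow 2 t).div_const 2
  have hB (t : ℝ) : HasDerivAt (fun t ↦ C * (Real.exp (t ^ 2 / 2) - 1))
      (t * (C * Real.exp (t ^ 2 / 2))) t :=
    (((hsq t).exp.sub_const 1).const_mul C).congr_deriv (by ring)
  refine image_norm_le_of_norm_deriv_right_le_deriv_boundary (f := fun t ↦ f t - f 0)
    (f' := fun t ↦ t • g t)
    (fun t ht ↦ ((hf t ht).sub_const _).continuousAt.continuousWithinAt)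
    (fun t ht ↦ ((hf t (Set.Ico_subset_Icc_self ht)).sub_const _).hasDerivWithinAt)
    (by simp) hB (fun t ht ↦ ?_) (Set.right_mem_Icc.2 hx)
  rw [norm_smul, Real.norm_of_nonneg ht.1]
  exact mul_le_mul_of_nonneg_left (hg t ht) ht.1

lemma norm_scaledHankel_le {x : ℝ} (hx : 0 ≤ x) (n : ℕ) :
    ‖scaledHankel n x‖ ≤ Real.exp (x ^ 2 / 2) := by
  induction n generalizing x with
  | zero =>
    rw [scaledHankel, mul_comm, Complex.norm_exp_ofReal_mul_I]
    exact Real.one_le_exp (by positivity)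
  | succ n ih =>
    have hsub : ‖scaledHankel (n + 1) x - scaledHankel (n + 1) 0‖ ≤
        1 * (Real.exp (x ^ 2 / 2) - 1) := by
      refine norm_sub_le_of_hasDerivAt_smul hx
        (fun t _ ↦ hasDerivAt_scaledHankel_add_one n t) fun t ht ↦ ?_
      rw [norm_div, norm_two_mul_natCast_add_one, one_mul]
      exact (div_le_self (norm_nonneg _) (by linarith [n.cast_nonneg (α := ℝ)])).trans (ih ht.1)
    rw [scaledHankel_zero_right] at hsub
    linarith [norm_le_norm_sub_add (scaledHankel (n + 1) x) 1, norm_one (α := ℂ)]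

lemma norm_scaledHankel_add_one_sub_one_le {x : ℝ} (hx : 0 ≤ x) (n : ℕ) :
    ‖scaledHankel (n + 1) x - 1‖ ≤ Real.exp (x ^ 2 / 2) / (2 * n + 1) := by
  have hsub : ‖scaledHankel (n + 1) x - scaledHankel (n + 1) 0‖ ≤
      (2 * n + 1 : ℝ)⁻¹ * (Real.exp (x ^ 2 / 2) - 1) := by
    refine norm_sub_le_of_hasDerivAt_smul hx
      (fun t _ ↦ hasDerivAt_scaledHankel_add_one n t) fun t ht ↦ ?_
    rw [norm_div, norm_two_mul_natCast_add_one, div_eq_inv_mul]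
    gcongr
    exact norm_scaledHankel_le ht.1 n
  rw [scaledHankel_zero_right, inv_mul_eq_div] at hsub
  refine hsub.trans ?_
  gcongr
  exact sub_le_self _ zero_le_one

lemma norm_mul_scaledHankel_add_two_sub_one_sub_le {x : ℝ} (hx : 0 ≤ x) (n : ℕ) :
    ‖(2 * n + 3) * (scaledHankel (n + 2) x - 1) - x ^ 2 / 2‖ ≤
      Real.exp (x ^ 2 / 2) / (2 * n + 1) := by
  have hcast : (2 * (n + 1 : ℕ) + 1 : ℂ) = 2 * n + 3 := by
    push_cast
    ring
  have hn : (2 * n + 3 : ℂ) ≠ 0 := hcast ▸ two_mul_natCast_add_one_ne_zero (n + 1)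
  have hderiv (t : ℝ) : HasDerivAt
      (fun t : ℝ ↦ (2 * n + 3) * (scaledHankel (n + 2) t - 1) - (t : ℂ) ^ 2 / 2)
      (t • (scaledHankel (n + 1) t - 1)) t := by
    refine ((((hasDerivAt_scaledHankel_add_one (n + 1) t).sub_const 1).const_mul _).sub
      ((hasDerivAt_ofReal_sq t).div_const 2)).congr_deriv ?_
    rw [Complex.real_smul, Complex.real_smul, hcast]
    field_simp
  have hzero : (2 * n + 3) * (scaledHankel (n + 2) 0 - 1) - ((0 : ℝ) : ℂ) ^ 2 / 2 = 0 := by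
    simp [scaledHankel_zero_right]
  have hsub := norm_sub_le_of_hasDerivAt_smul (C := (2 * n + 1 : ℝ)⁻¹) hx
    (fun t _ ↦ hderiv t) fun t ht ↦ by
      simpa only [div_eq_inv_mul] using norm_scaledHankel_add_one_sub_one_le ht.1 n
  rw [hzero, sub_zero, inv_mul_eq_div] at hsub
  refine hsub.trans ?_
  gcongr
  exact sub_le_self _ zero_le_one

lemma tendsto_div_two_mul_natCast_add_one (C : ℝ) :
    Tendsto (fun n : ℕ ↦ C / (2 * n + 1)) atTop (𝓝 0) :=
  (tendsto_atTop_add_const_right _ 1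
    (tendsto_natCast_atTop_atTop.const_mul_atTop two_pos)).const_div_atTop C

lemma tendsto_scaledHankel {x : ℝ} (hx : 0 ≤ x) :
    Tendsto (fun n ↦ scaledHankel n x) atTop (𝓝 1) :=
  (tendsto_add_atTop_iff_nat 1).1 <| tendsto_iff_norm_sub_tendsto_zero.2 <|
    squeeze_zero (fun _ ↦ norm_nonneg _) (norm_scaledHankel_add_one_sub_one_le hx)
      (tendsto_div_two_mul_natCast_add_one _)

lemma tendsto_natCast_mul_scaledHankel_sub_one {x : ℝ} (hx : 0 ≤ x) :
    Tendsto (fun n : ℕ ↦ n * (scaledHankel n x - 1)) atTop (𝓝 (x ^ 2 / 4)) := by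
  rw [← tendsto_add_atTop_iff_nat 2]
  have hodd : Tendsto (fun n : ℕ ↦ (2 * n + 3) * (scaledHankel (n + 2) x - 1)) atTop
      (𝓝 (x ^ 2 / 2)) :=
    tendsto_iff_norm_sub_tendsto_zero.2 <| squeeze_zero (fun _ ↦ norm_nonneg _)
      (norm_mul_scaledHankel_add_two_sub_one_sub_le hx) (tendsto_div_two_mul_natCast_add_one _)
  have hone : Tendsto (fun n : ℕ ↦ scaledHankel (n + 2) x - 1) atTop (𝓝 (1 - 1)) :=
    ((tendsto_add_atTop_iff_nat 2).2 (tendsto_scaledHankel hx)).sub_const 1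
  convert (hodd.add hone).div_const 2 using 2
  · push_cast
    ring
  · ring

lemma tendsto_natCast_mul_scaledHankel_div_sub_one {x y : ℝ} (hx : 0 ≤ x) (hy : 0 ≤ y) :
    Tendsto (fun n : ℕ ↦ n * (scaledHankel n x / scaledHankel n y - 1)) atTop
      (𝓝 (x ^ 2 / 4 - y ^ 2 / 4)) := by
  have hlim := ((tendsto_natCast_mul_scaledHankel_sub_one hx).sub
    (tendsto_natCast_mul_scaledHankel_sub_one hy)).div (tendsto_scaledHankel hy) one_ne_zero
  rw [div_one] at hlim
  refine hlim.congr' ?_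
  filter_upwards [(tendsto_scaledHankel hy).eventually_ne one_ne_zero] with n hn
  rw [Pi.div_apply]
  field_simp
  ring

lemma tendsto_natCast_mul_h1sph_ratio_sub {κ κ' R R' : ℝ} (hκ : 0 < κ) (hκ' : 0 < κ')
    (hR : 0 < R) (hR' : 0 < R') :
    Tendsto (fun n : ℕ ↦ n * ((R / R') ^ (n + 1) *
        (h1sph n (κ * R) / h1sph n (κ * R') - h1sph n (κ' * R) / h1sph n (κ' * R')))) atTop
      (𝓝 (((κ ^ 2 - κ' ^ 2) * (R ^ 2 - R' ^ 2) / 4 : ℝ) : ℂ)) := by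
  have hRC : (R : ℂ) ≠ 0 := mod_cast hR.ne'
  have hRC' : (R' : ℂ) ≠ 0 := mod_cast hR'.ne'
  have hratio {k : ℝ} (hk : 0 < k) (n : ℕ) :
      (R / R' : ℂ) ^ (n + 1) * (h1sph n (k * R) / h1sph n (k * R')) =
        scaledHankel n (k * R) / scaledHankel n (k * R') := by
    have hkC : (k : ℂ) ≠ 0 := mod_cast hk.ne'
    rw [h1sph_div_h1sph (by positivity) (by positivity), ← mul_assoc, ← mul_pow]
    push_cast
    rw [mul_div_mul_left _ _ hkC, div_mul_div_cancel₀ hRC', div_self hRC, one_pow, one_mul]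
  have hlim {k : ℝ} (hk : 0 < k) := tendsto_natCast_mul_scaledHankel_div_sub_one
    (mul_nonneg hk.le hR.le) (mul_nonneg hk.le hR'.le)
  convert (hlim hκ).sub (hlim hκ') using 2 with n
  · rw [mul_sub ((R / R' : ℂ) ^ (n + 1)), hratio hκ, hratio hκ']
    ring
  · push_cast
    ring

lemma eventually_norm_h1sph_ratio_sub_le {κ κ' R R' B : ℝ} (hκ : 0 < κ) (hκ' : 0 < κ')
    (hR : 0 < R) (hR' : 0 < R') (hB : |(κ ^ 2 - κ' ^ 2) * (R ^ 2 - R' ^ 2) / 4| < B) :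
    ∀ᶠ n : ℕ in atTop,
      ‖h1sph n (κ * R) / h1sph n (κ * R') - h1sph n (κ' * R) / h1sph n (κ' * R')‖ ≤
        B / n * (R' / R) ^ (n + 1) := by
  have hlim := (tendsto_natCast_mul_h1sph_ratio_sub hκ hκ' hR hR').norm
  rw [Complex.norm_real, Real.norm_eq_abs] at hlim
  filter_upwards [hlim.eventually_lt_const hB, eventually_gt_atTop 0] with n hn hn₀
  have hn₀' : (0 : ℝ) < n := mod_cast hn₀
  rw [norm_mul, norm_mul, norm_pow, norm_div, Complex.norm_natCast, Complex.norm_real,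
    Complex.norm_real, Real.norm_of_nonneg hR.le, Real.norm_of_nonneg hR'.le] at hn
  rw [← inv_div R R', inv_pow, ← div_eq_mul_inv, le_div_iff₀ (by positivity),
    le_div_iff₀ hn₀', mul_comm, mul_comm _ ((R / R') ^ (n + 1))]
  exact hn.le

lemma norm_h2sph_ratio_sub (n : ℕ) (x y x' y' : ℝ) :
    ‖h2sph n x / h2sph n y - h2sph n x' / h2sph n y'‖ =
      ‖h1sph n x / h1sph n y - h1sph n x' / h1sph n y'‖ := by
  simp only [h2sph_eq_conj_h1sph, ← map_div₀, ← map_sub, Complex.norm_conj]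

lemma abs_sq_sub_sq_mul_sq_sub_sq_le {a b c d : ℝ} (ha : 0 ≤ a) (hab : a ≤ b) (hc : 0 ≤ c)
    (hcd : c ≤ d) :
    |(a ^ 2 - b ^ 2) * (d ^ 2 - c ^ 2) / 4| ≤ b * (b - a) * d * (d - c) := by
  have hb := ha.trans hab
  have hd := hc.trans hcd
  have hba := sub_nonneg.2 hab
  have hdc := sub_nonneg.2 hcd
  calc |(a ^ 2 - b ^ 2) * (d ^ 2 - c ^ 2) / 4|
      = |-((b - a) * (d - c) * ((b + a) * (d + c) / 4))| := by ring_nf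
    _ = (b - a) * (d - c) * ((b + a) * (d + c) / 4) := by
      rw [abs_neg, abs_of_nonneg (mul_nonneg (mul_nonneg hba hdc) (by positivity))]
    _ ≤ (b - a) * (d - c) * ((b + b) * (d + d) / 4) := by gcongr
    _ = b * (b - a) * d * (d - c) := by ring

/-- Difference of ratios of spherical Hankel functions (of both kinds) at the
compressional and shear wavenumbers decays like `(R'/R)^{n+1}`. -/
theorem hankel_ratio_difference_bound (R R' κp κs : ℝ)
    (hκp : 0 < κp) (hκ : κp < κs) (hR' : 0 < R') (hRR : R' < R) :
    ∃ N : ℕ, ∀ n : ℕ, N ≤ n →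
      ‖(h1sph n (κp * R) / h1sph n (κp * R')
          - h1sph n (κs * R) / h1sph n (κs * R'))‖
        ≤ (14/3) * (κs * (κs - κp) / (n : ℝ)) * R * (R - R') * (R' / R) ^ (n + 1) ∧
      ‖(h2sph n (κp * R) / h2sph n (κp * R')
          - h2sph n (κs * R) / h2sph n (κs * R'))‖
        ≤ (14/3) * (κs * (κs - κp) / (n : ℝ)) * R * (R - R') * (R' / R) ^ (n + 1) := by
  have hR : 0 < R := hR'.trans hRR
  have hκs : 0 < κs := hκp.trans hκ
  have hpos : 0 < κs * (κs - κp) * R * (R - R') :=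
    mul_pos (mul_pos (mul_pos hκs (sub_pos.2 hκ)) hR) (sub_pos.2 hRR)
  have hlimit : |(κp ^ 2 - κs ^ 2) * (R ^ 2 - R' ^ 2) / 4| <
      14 / 3 * (κs * (κs - κp) * R * (R - R')) :=
    (abs_sq_sub_sq_mul_sq_sub_sq_le hκp.le hκ.le hR'.le hRR.le).trans_lt (by linarith)
  obtain ⟨N, hN⟩ := eventually_atTop.1 (eventually_norm_h1sph_ratio_sub_le hκp hκs hR hR' hlimit)
  refine ⟨N, fun n hn ↦ ?_⟩
  rw [norm_h2sph_ratio_sub, and_self]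
  convert hN n hn using 2
  ring
end

section
/- Fix z > 0. There exist constants C > 0 and ν₀ > z + 1 such that for every real ν ≥ ν₀, |log((ν−1)/z + √(((ν−1)/z)² − 1)) − (log(2ν/z) − 1/ν − (1/2 + z²/4)/ν²)| ≤ C/ν³. -/
/-!
Write `y = (ν - a) / z`. With `w = (y - √(y² - 1)) / (2y)` one has `y + √(y² - 1) = 2y (1 - w)` and
`w (1 - w) = 1 / (4y²)`, so `w = O(y⁻²)` and
`arcosh y = log (2y) + log (1 - w) = log (2y) - 1 / (4y²) + O(y⁻⁴)`.
Since `y = (ν / z) (1 - a / ν)`, expanding `log (1 - x)` and `(1 - x)⁻²` at `x = a / ν` turns this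
into an expansion in powers of `1 / ν`.
-/

section

open Real Filter Asymptotics Topology

theorem abs_log_one_sub_add_mul_one_sub_le {w : ℝ} (hw : w < 1) :
    |log (1 - w) + w * (1 - w)| ≤ w ^ 2 + w ^ 2 / (1 - w) := by
  have hpos : 0 < 1 - w := sub_pos.mpr hw
  have upper : log (1 - w) ≤ -w := by linarith [log_le_sub_one_of_pos hpos]
  have lower : 1 - (1 - w)⁻¹ ≤ log (1 - w) := one_sub_inv_le_log_of_pos hpos
  have remainder : 1 - (1 - w)⁻¹ + w = -(w ^ 2 / (1 - w)) := by
    field_simp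
    ring
  have hquot : 0 ≤ w ^ 2 / (1 - w) := by positivity
  exact abs_le.mpr ⟨by linarith [sq_nonneg w], by linarith [sq_nonneg w, hquot]⟩

theorem abs_arcosh_sub_log_two_mul_le {y : ℝ} (hy : 1 ≤ y) :
    |arcosh y - (log (2 * y) - 1 / (4 * y ^ 2))| ≤ 3 / (4 * y ^ 4) := by
  have hypos : 0 < y := by linarith
  set s := √(y ^ 2 - 1) with hs
  have hs_nonneg : 0 ≤ s := sqrt_nonneg _
  have hs_sq : s ^ 2 = y ^ 2 - 1 := sq_sqrt (by nlinarith)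
  obtain ⟨w, hw⟩ : ∃ w, w = (y - s) / (2 * y) := ⟨_, rfl⟩
  have hw_prod : w * (1 - w) = 1 / (4 * y ^ 2) := by
    rw [hw]
    field_simp
    linear_combination -4 * hs_sq
  have hw_half : w ≤ 1 / 2 := by
    rw [hw, div_le_iff₀ (mul_pos two_pos hypos)]
    linarith
  have hw_nonneg : 0 ≤ w := by
    have : 0 < w * (1 - w) := hw_prod ▸ by positivity
    exact (pos_of_mul_pos_left this (by linarith)).le
  have harcosh : arcosh y = log (2 * y) + log (1 - w) := by
    rw [← log_mul (by positivity) (by linarith), arcosh, ← hs, hw]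
    congr 1
    field_simp
    ring
  calc |arcosh y - (log (2 * y) - 1 / (4 * y ^ 2))|
      = |log (1 - w) + w * (1 - w)| := by rw [harcosh, hw_prod]; ring_nf
    _ ≤ w ^ 2 + w ^ 2 / (1 - w) := abs_log_one_sub_add_mul_one_sub_le (by linarith)
    _ ≤ w ^ 2 + w ^ 2 / (1 / 2) := by gcongr; linarith
    _ = 3 * w ^ 2 := by ring
    _ ≤ 3 * (2 * (w * (1 - w))) ^ 2 := by gcongr; nlinarith
    _ = 3 / (4 * y ^ 4) := by
      rw [hw_prod]
      field_simp
      norm_num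

theorem arcosh_sub_log_two_mul_isBigO :
    (fun y : ℝ => arcosh y - (log (2 * y) - 1 / (4 * y ^ 2))) =O[atTop] fun y => (1 / y) ^ 4 := by
  refine .of_bound (3 / 4) ?_
  filter_upwards [eventually_ge_atTop 1] with y hy
  rw [one_div_pow, norm_eq_abs, norm_of_nonneg (by positivity), div_mul_div_comm, mul_one]
  exact abs_arcosh_sub_log_two_mul_le hy

theorem sum_range_add_log_one_sub_isBigO (n : ℕ) :
    (fun x : ℝ => (∑ i ∈ Finset.range n, x ^ (i + 1) / (i + 1)) + log (1 - x))
      =O[𝓝 0] fun x => x ^ (n + 1) := by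
  refine .of_bound 2 ?_
  filter_upwards [Metric.ball_mem_nhds 0 one_half_pos] with x hx
  have hx_half : |x| < 1 / 2 := by simpa only [mem_ball_zero_iff, norm_eq_abs] using hx
  calc ‖(∑ i ∈ Finset.range n, x ^ (i + 1) / (i + 1)) + log (1 - x)‖
      ≤ |x| ^ (n + 1) / (1 - |x|) := abs_log_sub_add_sum_range_le (by linarith) n
    _ ≤ |x| ^ (n + 1) / (1 / 2) := by gcongr; linarith
    _ = 2 * ‖x ^ (n + 1)‖ := by rw [norm_pow, norm_eq_abs]; ring

theorem one_div_one_sub_pow_sub_one_isBigO (n : ℕ) :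
    (fun x : ℝ => 1 / (1 - x) ^ n - 1) =O[𝓝 0] fun x => x := by
  have hdiff : DifferentiableAt ℝ (fun x : ℝ => 1 / (1 - x) ^ n) 0 := by
    fun_prop (disch := norm_num)
  simpa using hdiff.isBigO_sub

theorem one_div_sub_div_isBigO (a : ℝ) {z : ℝ} (hz : z ≠ 0) :
    (fun ν : ℝ => 1 / ((ν - a) / z)) =O[atTop] fun ν => 1 / ν := by
  have hsub : (fun ν : ℝ => ν) =O[atTop] fun ν => ν - a :=
    (isLittleO_const_id_atTop a).right_isBigO_sub
  have hdiv : (fun ν : ℝ => ν) =O[atTop] fun ν => (ν - a) / z := by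
    simpa only [inv_mul_eq_div] using hsub.const_mul_right (inv_ne_zero hz)
  simp only [one_div]
  exact hdiv.inv_rev ((eventually_ne_atTop 0).mono fun _ hν h => absurd h hν)

theorem log_two_mul_sub_div_sub_eq {a z ν : ℝ} (hz : z ≠ 0) (hν : ν ≠ 0) (ha : ν ≠ a) :
    log (2 * ((ν - a) / z)) - 1 / (4 * ((ν - a) / z) ^ 2)
      = log (2 * ν / z) - a / ν - (a ^ 2 / 2 + z ^ 2 / 4) / ν ^ 2
        + ((∑ i ∈ Finset.range 2, (a / ν) ^ (i + 1) / (i + 1)) + log (1 - a / ν))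
        - z ^ 2 / 4 * ((1 / (1 - a / ν) ^ 2 - 1) * (1 / ν) ^ 2) := by
  have hsub : ν - a ≠ 0 := sub_ne_zero.mpr ha
  have hfactor : 1 - a / ν = (ν - a) / ν := by field_simp
  have hlog : log (2 * ((ν - a) / z)) = log (2 * ν / z) + log (1 - a / ν) := by
    rw [hfactor, ← log_mul (by positivity) (by positivity)]
    congr 1
    field_simp
  rw [hlog, hfactor]
  simp only [Finset.sum_range_succ, Finset.sum_range_zero]
  push_cast
  field_simp
  ring

theorem arcosh_sub_div_isBigO (a : ℝ) {z : ℝ} (hz : 0 < z) :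
    (fun ν : ℝ => arcosh ((ν - a) / z)
        - (log (2 * ν / z) - a / ν - (a ^ 2 / 2 + z ^ 2 / 4) / ν ^ 2))
      =O[atTop] fun ν => (1 / ν) ^ 3 := by
  have hy : Tendsto (fun ν : ℝ => (ν - a) / z) atTop atTop :=
    (tendsto_atTop_add_const_right _ (-a) tendsto_id).atTop_div_const hz
  have hinv : Tendsto (fun ν : ℝ => 1 / ν) atTop (𝓝 0) := tendsto_const_nhds.div_atTop tendsto_id
  have hx : Tendsto (fun ν : ℝ => a / ν) atTop (𝓝 0) := tendsto_const_nhds.div_atTop tendsto_id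
  have hx_isBigO : (fun ν : ℝ => a / ν) =O[atTop] fun ν => 1 / ν := by
    simpa only [mul_one_div] using (isBigO_refl (fun ν : ℝ => 1 / ν) atTop).const_mul_left a
  have hpow : (fun ν : ℝ => (1 / ((ν - a) / z)) ^ 4) =O[atTop] fun ν => (1 / ν) ^ 3 :=
    ((one_div_sub_div_isBigO a hz.ne').pow 4).trans
      ((isLittleO_pow_pow (by norm_num : 3 < 4)).isBigO.comp_tendsto hinv)
  have harcosh : (fun ν : ℝ => arcosh ((ν - a) / z)
      - (log (2 * ((ν - a) / z)) - 1 / (4 * ((ν - a) / z) ^ 2))) =O[atTop] fun ν => (1 / ν) ^ 3 :=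
    (arcosh_sub_log_two_mul_isBigO.comp_tendsto hy).trans hpow
  have hlog : (fun ν : ℝ => (∑ i ∈ Finset.range 2, (a / ν) ^ (i + 1) / (i + 1)) + log (1 - a / ν))
      =O[atTop] fun ν => (1 / ν) ^ 3 :=
    ((sum_range_add_log_one_sub_isBigO 2).comp_tendsto hx).trans (hx_isBigO.pow 3)
  have hsquare_inner : (fun ν : ℝ => 1 / (1 - a / ν) ^ 2 - 1) =O[atTop] fun ν => 1 / ν :=
    ((one_div_one_sub_pow_sub_one_isBigO 2).comp_tendsto hx).trans hx_isBigO
  have hsquare : (fun ν : ℝ => (1 / (1 - a / ν) ^ 2 - 1) * (1 / ν) ^ 2)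
      =O[atTop] fun ν => (1 / ν) ^ 3 :=
    (hsquare_inner.mul (isBigO_refl _ _)).congr_right fun _ => (pow_succ' _ 2).symm
  refine ((harcosh.add hlog).sub (hsquare.const_mul_left (z ^ 2 / 4))).congr' ?_ .rfl
  filter_upwards [eventually_ne_atTop 0, eventually_ne_atTop a] with ν hν ha
  rw [log_two_mul_sub_div_sub_eq hz.ne' hν ha]
  ring

end

/-- Asymptotics of `log((ν-1)/z + √(((ν-1)/z)² - 1))
= log(2ν/z) - 1/ν - (1/2 + z²/4)/ν² + O(1/ν³)`. -/
theorem log_arccosh_shifted_asymptotic (z : ℝ) (hz : 0 < z) :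
    ∃ C : ℝ, 0 < C ∧ ∃ ν₀ : ℝ, z + 1 < ν₀ ∧ ∀ ν : ℝ, ν₀ ≤ ν →
      |Real.log ((ν - 1) / z + Real.sqrt (((ν - 1) / z) ^ 2 - 1))
          - (Real.log (2 * ν / z) - 1 / ν - (1/2 + z ^ 2 / 4) / ν ^ 2)|
        ≤ C / ν ^ 3 := by
  obtain ⟨C, hC, hbound⟩ := (arcosh_sub_div_isBigO 1 hz).exists_pos
  obtain ⟨ν₁, hν₁⟩ := Filter.eventually_atTop.mp hbound.bound
  refine ⟨C, hC, max ν₁ (z + 2), lt_max_of_lt_right (by linarith), fun ν hν => ?_⟩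
  have hpos : 0 < ν := by linarith [le_of_max_le_right hν]
  have h := hν₁ ν (le_of_max_le_left hν)
  rwa [Real.arcosh, one_pow, one_div_pow, Real.norm_eq_abs, Real.norm_of_nonneg (by positivity),
    mul_one_div] at h
end
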